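/- arXiv:1401.5571 — 2 statements merged into one kernel-verified Lean document; each statement's English description precedes it below -/
import Mathlib

section
/- Let B be a separable Banach space, let μ₀ be a Borel probability measure on B which is Gaussian (in the sense that every continuous linear functional pushes μ₀ forward to a Gaussian measure on ℝ), fix y ∈ ℝ^J, and let Φ: B × ℝ^J → ℝ be continuous and satisfy the bound 0 ≤ Φ(u;y) ≤ |y|_Γ² + C² exp(2‖u‖_B) for a constant C > 0 and all u ∈ B. Then Z := ∫_B exp(−Φ(u;y)) μ₀(du) satisfies 0 < Z ≤ 1, and μ^y(A) := Z^{-1} ∫_A exp(−Φ(u;y)) μ₀(du) defines a Borel probability measure on B absolutely continuous with respect to μ₀ with dμ^y/dμ₀ = Z^{-1} exp(−Φ(·;y)). -/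
open Real Matrix MeasureTheory ProbabilityTheory

/-- The covariance-weighted norm `|z|_Γ = |Γ^{-1/2} z|`, equivalently `|z|_Γ² = ⟨z, Γ⁻¹ z⟩`. -/
noncomputable def covNorm {J : ℕ} (Γ : Matrix (Fin J) (Fin J) ℝ) (z : Fin J → ℝ) : ℝ :=
  Real.sqrt (z ⬝ᵥ (Γ⁻¹ *ᵥ z))

/-! Since `0 ≤ Φ`, the likelihood `exp (-Φ)` takes values in `(0, 1]`, so its integral against a
probability measure lies in `(0, 1]` as well: an integrable function that is positive everywhere
has positive integral against a nonzero measure. The posterior is then the exponential tilting of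
the prior by `-Φ`. -/

section ExponentialTilting

variable {Ω : Type*} [MeasurableSpace Ω] {μ : Measure Ω} {f : Ω → ℝ} {b : ℝ}

lemma integrable_exp_of_ae_le_const [IsFiniteMeasure μ] (hf : AEMeasurable f μ)
    (hfb : ∀ᵐ x ∂μ, f x ≤ b) : Integrable (fun x ↦ exp (f x)) μ := by
  simpa only [one_mul] using integrable_exp_mul_of_le 1 b zero_le_one hf hfb

lemma integral_exp_le_of_ae_le_const [IsFiniteMeasure μ] (hfb : ∀ᵐ x ∂μ, f x ≤ b) :
    ∫ x, exp (f x) ∂μ ≤ μ.real Set.univ * exp b :=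
  calc
    ∫ x, exp (f x) ∂μ ≤ ∫ _, exp b ∂μ :=
      integral_mono_of_nonneg (ae_of_all _ fun x ↦ (exp_pos (f x)).le) (integrable_const _)
        (hfb.mono fun _ hx ↦ exp_le_exp.mpr hx)
    _ = μ.real Set.univ * exp b := by rw [integral_const, smul_eq_mul]

lemma tilted_eq_withDensity_inv_mul (μ : Measure Ω) (f : Ω → ℝ) :
    μ.tilted f =
      μ.withDensity fun x ↦ ENNReal.ofReal ((∫ x', exp (f x') ∂μ)⁻¹ * exp (f x)) := by
  simp only [Measure.tilted, div_eq_inv_mul]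

end ExponentialTilting

theorem posterior_well_defined_gaussian_prior_general {Ω : Type*} [MeasurableSpace Ω]
    (μ₀ : Measure Ω) [IsProbabilityMeasure μ₀] (Φ : Ω → ℝ) (hΦ_meas : AEMeasurable Φ μ₀)
    (hΦ_nonneg : ∀ᵐ u ∂μ₀, 0 ≤ Φ u) :
    0 < ∫ u, exp (-Φ u) ∂μ₀ ∧
    ∫ u, exp (-Φ u) ∂μ₀ ≤ 1 ∧
    IsProbabilityMeasure (μ₀.withDensity fun u ↦
      ENNReal.ofReal ((∫ u', exp (-Φ u') ∂μ₀)⁻¹ * exp (-Φ u))) ∧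
    (μ₀.withDensity fun u ↦
      ENNReal.ofReal ((∫ u', exp (-Φ u') ∂μ₀)⁻¹ * exp (-Φ u))) ≪ μ₀ ∧
    (μ₀.withDensity fun u ↦
      ENNReal.ofReal ((∫ u', exp (-Φ u') ∂μ₀)⁻¹ * exp (-Φ u))).rnDeriv μ₀
      =ᵐ[μ₀] fun u ↦ ENNReal.ofReal ((∫ u', exp (-Φ u') ∂μ₀)⁻¹ * exp (-Φ u)) := by
  have log_likelihood_nonpos : ∀ᵐ u ∂μ₀, -Φ u ≤ 0 :=
    hΦ_nonneg.mono fun _ ↦ neg_nonpos_of_nonneg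
  have likelihood_integrable : Integrable (fun u ↦ exp (-Φ u)) μ₀ :=
    integrable_exp_of_ae_le_const hΦ_meas.fun_neg log_likelihood_nonpos
  have evidence_le_one : ∫ u, exp (-Φ u) ∂μ₀ ≤ 1 := by
    simpa only [probReal_univ, exp_zero, mul_one] using
      integral_exp_le_of_ae_le_const log_likelihood_nonpos
  rw [← tilted_eq_withDensity_inv_mul μ₀ fun u ↦ -Φ u]
  exact ⟨integral_exp_pos likelihood_integrable, evidence_le_one,
    isProbabilityMeasure_tilted likelihood_integrable, tilted_absolutelyContinuous μ₀ _,
    by simpa only [div_eq_inv_mul] using rnDeriv_tilted_left_self hΦ_meas.fun_neg⟩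

/-- **Existence of the Bayesian posterior with a Gaussian prior on a separable Banach space.**
Let `B` be a separable Banach space, `μ₀` a Gaussian Borel probability measure on `B`
(every continuous linear functional pushes `μ₀` forward to a Gaussian measure on `ℝ`),
and `Φ : B × ℝ^J → ℝ` continuous with `0 ≤ Φ(u;y) ≤ |y|_Γ² + C² exp(2‖u‖)`.  Then
`Z = ∫ exp(−Φ(u;y)) dμ₀ ∈ (0,1]` and `μ^y = Z⁻¹ exp(−Φ(·;y)) μ₀` is a Borel probability
measure absolutely continuous with respect to `μ₀` with density `Z⁻¹ exp(−Φ(·;y))`. -/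
theorem posterior_well_defined_gaussian_prior
    {B : Type*} [NormedAddCommGroup B] [NormedSpace ℝ B] [CompleteSpace B]
    [TopologicalSpace.SeparableSpace B] [MeasurableSpace B] [BorelSpace B]
    {J : ℕ} (Γ : Matrix (Fin J) (Fin J) ℝ) (hΓ : Γ.PosDef) (hΓsymm : Γ.IsSymm)
    (μ₀ : Measure B) [IsProbabilityMeasure μ₀]
    (hGaussian : ∀ ℓ : B →L[ℝ] ℝ, ∃ (m : ℝ) (v : NNReal),
      μ₀.map ℓ = gaussianReal m v)  -- μ₀ is Gaussian
    (y : Fin J → ℝ)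
    (Φ : B × (Fin J → ℝ) → ℝ) (hΦcont : Continuous Φ)
    (C : ℝ) (hC : 0 < C)
    (hΦ_nonneg : ∀ u : B, 0 ≤ Φ (u, y))
    (hΦ_bound : ∀ u : B, Φ (u, y) ≤ (covNorm Γ y) ^ 2 + C ^ 2 * Real.exp (2 * ‖u‖)) :
    0 < ∫ u, Real.exp (-(Φ (u, y))) ∂μ₀ ∧
    (∫ u, Real.exp (-(Φ (u, y))) ∂μ₀) ≤ 1 ∧
    IsProbabilityMeasure (μ₀.withDensity (fun u => ENNReal.ofReal
      ((∫ u', Real.exp (-(Φ (u', y))) ∂μ₀)⁻¹ * Real.exp (-(Φ (u, y)))))) ∧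
    (μ₀.withDensity (fun u => ENNReal.ofReal
      ((∫ u', Real.exp (-(Φ (u', y))) ∂μ₀)⁻¹ * Real.exp (-(Φ (u, y)))))) ≪ μ₀ ∧
    (μ₀.withDensity (fun u => ENNReal.ofReal
        ((∫ u', Real.exp (-(Φ (u', y))) ∂μ₀)⁻¹ * Real.exp (-(Φ (u, y)))))).rnDeriv μ₀
      =ᵐ[μ₀] fun u => ENNReal.ofReal
        ((∫ u', Real.exp (-(Φ (u', y))) ∂μ₀)⁻¹ * Real.exp (-(Φ (u, y)))) := by
  exact posterior_well_defined_gaussian_prior_general μ₀ (fun u ↦ Φ (u, y))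
    (hΦcont.comp (.prodMk_left y)).aemeasurable (ae_of_all _ hΦ_nonneg)
end

section
/- Let (U, 𝒜, μ₀) be a probability space, Γ a symmetric positive definite J×J matrix, and 𝒢: U → ℝ^J measurable. For y ∈ ℝ^J define Φ(u;y) = ½|y − 𝒢(u)|_Γ², and for r > 0 set M(r,u) := r + |𝒢(u)|_Γ. Assume ∫_U M(r,u)² μ₀(du) < ∞ and that Z(y) := ∫_U exp(−Φ(u;y)) μ₀(du) > 0 for all |y|_Γ ≤ r. Let μ^y denote the probability measure with dμ^y/dμ₀ = Z(y)^{-1} exp(−Φ(·;y)). Then for every r > 0 there exist constants C₁ = C₁(r), C₂ = C₂(r) such that for all y, y' with max{|y|_Γ, |y'|_Γ} < r: d_TV(μ^y, μ^{y'}) ≤ C₁ |y − y'|_Γ and d_Hell(μ^y, μ^{y'}) ≤ C₂ |y − y'|_Γ. -/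
open Real Matrix MeasureTheory

/-- The model–data misfit `Φ(u;y) = ½ |y − 𝒢(u)|_Γ²`. -/
noncomputable def misfit {U : Type*} {J : ℕ} (Γ : Matrix (Fin J) (Fin J) ℝ)
    (G : U → Fin J → ℝ) (u : U) (y : Fin J → ℝ) : ℝ :=
  (covNorm Γ (y - G u)) ^ 2 / 2

/-- The density `Z(y)⁻¹ exp(−Φ(u;y))` of the Bayesian posterior `μ^y` with respect to the
prior `μ₀`, where `Z(y) = ∫ exp(−Φ(u;y)) dμ₀`. -/
noncomputable def postDensity {U : Type*} [MeasurableSpace U] {J : ℕ}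
    (Γ : Matrix (Fin J) (Fin J) ℝ) (G : U → Fin J → ℝ) (μ₀ : Measure U)
    (y : Fin J → ℝ) (u : U) : ℝ :=
  (∫ u', Real.exp (-(misfit Γ G u' y)) ∂μ₀)⁻¹ * Real.exp (-(misfit Γ G u y))

/-!
The map `x ↦ exp (-x²)` is globally Lipschitz, so the square root of the likelihood,
`exp (-(|y - 𝒢 u|_Γ / 2)²)`, is Lipschitz in the data `y` uniformly in `u`. Writing
`A² = ∫ p ∂μ` and `B² = ∫ q ∂μ`, one has
`∫ (√p / A - √q / B)² ∂μ = (∫ (√p - √q)² ∂μ - (A - B)²) / (A * B)`,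
so normalising two densities of mass at least `c` expands their Hellinger distance by at most
`c ^ (-1/2)`; for `|y|_Γ ≤ r` the mass `Z(y)` is at least `∫ exp (-(r + |𝒢|_Γ)² / 2) ∂μ₀ > 0`.
The total variation bound follows from `d_TV ≤ √2 d_Hell`.
-/

theorem lipschitzWith_exp_neg_sq : LipschitzWith 1 fun x : ℝ => rexp (-x ^ 2) := by
  have hderiv (x : ℝ) : HasDerivAt (fun x : ℝ => rexp (-x ^ 2)) (rexp (-x ^ 2) * -(2 * x)) x := by
    simpa using ((hasDerivAt_pow 2 x).neg).exp
  refine lipschitzWith_of_nnnorm_deriv_le (fun x => (hderiv x).differentiableAt) fun x => ?_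
  have h_two_mul_le : 2 * |x| ≤ rexp (x ^ 2) := by
    nlinarith [add_one_le_exp (x ^ 2), sq_nonneg (|x| - 1), sq_abs x]
  rw [← NNReal.coe_le_coe, coe_nnnorm, (hderiv x).deriv, norm_mul, norm_neg, norm_mul,
    norm_of_nonneg (exp_pos _).le, norm_of_nonneg zero_le_two, norm_eq_abs, exp_neg,
    NNReal.coe_one]
  exact inv_mul_le_one_of_le₀ h_two_mul_le (exp_pos _).le

section CovNorm

variable {J : ℕ} {Γ : Matrix (Fin J) (Fin J) ℝ}

theorem covNorm_nonneg (z : Fin J → ℝ) : 0 ≤ covNorm Γ z :=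
  sqrt_nonneg _

theorem continuous_covNorm : Continuous (covNorm Γ) := by
  unfold covNorm
  fun_prop

theorem covNorm_eq_norm (hΓ : Γ.PosDef) (z : Fin J → ℝ) :
    covNorm Γ z = (Γ⁻¹.toSeminormedAddCommGroup hΓ.inv.posSemidef).norm z :=
  congrArg sqrt (dotProduct_comm z (Γ⁻¹ *ᵥ z))

theorem covNorm_sub_le (hΓ : Γ.PosDef) (a b : Fin J → ℝ) :
    covNorm Γ (a - b) ≤ covNorm Γ a + covNorm Γ b := by
  simp only [covNorm_eq_norm hΓ]
  let := (Γ⁻¹.toSeminormedAddCommGroup hΓ.inv.posSemidef).toSeminormedAddGroup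
  exact norm_sub_le a b

theorem abs_covNorm_sub_covNorm_le (hΓ : Γ.PosDef) (a b : Fin J → ℝ) :
    |covNorm Γ a - covNorm Γ b| ≤ covNorm Γ (a - b) := by
  simp only [covNorm_eq_norm hΓ]
  let := Γ⁻¹.toSeminormedAddCommGroup hΓ.inv.posSemidef
  exact abs_norm_sub_norm_le a b

end CovNorm

section Densities

variable {U : Type*} [MeasurableSpace U] {μ : Measure U} {p q : U → ℝ}

/-- The total variation distance `½ ∫ |p - q| ∂μ` between the measures with densities `p` and `q`
with respect to `μ`. -/
noncomputable def tvDist (μ : Measure U) (p q : U → ℝ) : ℝ :=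
  1 / 2 * ∫ u, |p u - q u| ∂μ

/-- The Hellinger distance `(½ ∫ (√p - √q)² ∂μ)^{1/2}` between the measures with densities `p` and
`q` with respect to `μ`; the densities need not be normalised. -/
noncomputable def hellingerDist (μ : Measure U) (p q : U → ℝ) : ℝ :=
  √(1 / 2 * ∫ u, (√(p u) - √(q u)) ^ 2 ∂μ)

/-- The probability density proportional to `p`, with the junk value `0` when `∫ p ∂μ = 0`. -/
noncomputable def normalizedDensity (μ : Measure U) (p : U → ℝ) (u : U) : ℝ :=
  (∫ v, p v ∂μ)⁻¹ * p u

theorem normalizedDensity_nonneg (hp₀ : 0 ≤ᵐ[μ] p) : 0 ≤ᵐ[μ] normalizedDensity μ p := by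
  filter_upwards [hp₀] with u hu
  exact mul_nonneg (inv_nonneg.mpr (integral_nonneg_of_ae hp₀)) hu

theorem integrable_normalizedDensity (hp : Integrable p μ) :
    Integrable (normalizedDensity μ p) μ :=
  hp.const_mul _

theorem integral_normalizedDensity (hp : ∫ u, p u ∂μ ≠ 0) :
    ∫ u, normalizedDensity μ p u ∂μ = 1 := by
  simp only [normalizedDensity, integral_const_mul, inv_mul_cancel₀ hp]

theorem memLp_two_sqrt (hp : Integrable p μ) (hp₀ : 0 ≤ᵐ[μ] p) : MemLp (fun u => √(p u)) 2 μ := by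
  rw [memLp_two_iff_integrable_sq (continuous_sqrt.comp_aestronglyMeasurable hp.1)]
  exact hp.congr (hp₀.mono fun u hu => (sq_sqrt hu).symm)

theorem integral_sq_linear_combination_sqrt (hp : Integrable p μ) (hp₀ : 0 ≤ᵐ[μ] p)
    (hq : Integrable q μ) (hq₀ : 0 ≤ᵐ[μ] q) (a b : ℝ) :
    ∫ u, (a * √(p u) + b * √(q u)) ^ 2 ∂μ =
      a ^ 2 * ∫ u, p u ∂μ + b ^ 2 * ∫ u, q u ∂μ + 2 * a * b * ∫ u, √(p u) * √(q u) ∂μ := by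
  have hpq : Integrable (fun u => √(p u) * √(q u)) μ :=
    (memLp_two_sqrt hp hp₀).integrable_mul (memLp_two_sqrt hq hq₀)
  have h_expand : ∀ᵐ u ∂μ, (a * √(p u) + b * √(q u)) ^ 2 =
      a ^ 2 * p u + b ^ 2 * q u + 2 * a * b * (√(p u) * √(q u)) := by
    filter_upwards [hp₀, hq₀] with u hpu hqu
    rw [add_sq, mul_pow, mul_pow, sq_sqrt hpu, sq_sqrt hqu]
    ring
  have h_squares : Integrable (fun u => a ^ 2 * p u + b ^ 2 * q u) μ :=
    (hp.const_mul _).add (hq.const_mul _)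
  rw [integral_congr_ae h_expand, integral_add h_squares (hpq.const_mul _),
    integral_add (hp.const_mul _) (hq.const_mul _)]
  simp only [integral_const_mul]

theorem integral_abs_mul_le_sqrt_mul_sqrt {f g : U → ℝ} (hf : MemLp f 2 μ) (hg : MemLp g 2 μ) :
    ∫ u, |f u * g u| ∂μ ≤ √(∫ u, f u ^ 2 ∂μ) * √(∫ u, g u ^ 2 ∂μ) := by
  have h := integral_mul_norm_le_Lp_mul_Lq (μ := μ) Real.HolderConjugate.two_two
    (f := f) (g := g) (by simpa using hf) (by simpa using hg)
  simpa only [norm_eq_abs, ← abs_mul, rpow_two, sq_abs, ← sqrt_eq_rpow] using h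

theorem hellingerDist_le_of_abs_sqrt_sub_le [IsFiniteMeasure μ] {δ : ℝ} (hδ : 0 ≤ δ)
    (h : ∀ᵐ u ∂μ, |√(p u) - √(q u)| ≤ δ) :
    hellingerDist μ p q ≤ √(μ.real Set.univ / 2) * δ := by
  have h_integral : ∫ u, (√(p u) - √(q u)) ^ 2 ∂μ ≤ ∫ _, δ ^ 2 ∂μ :=
    integral_mono_of_nonneg (ae_of_all _ fun u => sq_nonneg _) (integrable_const _)
      (h.mono fun u hu => sq_le_sq.mpr (hu.trans (le_abs_self δ)))
  rw [integral_const, smul_eq_mul] at h_integral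
  rw [hellingerDist, sqrt_le_left (by positivity), mul_pow, sq_sqrt (by positivity)]
  linarith

theorem tvDist_le_sqrt_two_mul_hellingerDist (hp : Integrable p μ) (hp₀ : 0 ≤ᵐ[μ] p)
    (hp₁ : ∫ u, p u ∂μ = 1) (hq : Integrable q μ) (hq₀ : 0 ≤ᵐ[μ] q) (hq₁ : ∫ u, q u ∂μ = 1) :
    tvDist μ p q ≤ √2 * hellingerDist μ p q := by
  have h_factor : ∀ᵐ u ∂μ, |p u - q u| = |(√(p u) - √(q u)) * (√(p u) + √(q u))| := by
    filter_upwards [hp₀, hq₀] with u hpu hqu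
    rw [mul_comm, ← sq_sub_sq, sq_sqrt hpu, sq_sqrt hqu]
  have h_sub := integral_sq_linear_combination_sqrt hp hp₀ hq hq₀ 1 (-1)
  have h_add := integral_sq_linear_combination_sqrt hp hp₀ hq hq₀ 1 1
  simp only [one_mul, neg_one_mul, ← sub_eq_add_neg] at h_sub h_add
  have h_sub_nonneg : 0 ≤ ∫ u, (√(p u) - √(q u)) ^ 2 ∂μ := integral_nonneg fun u => sq_nonneg _
  have h_add_le : ∫ u, (√(p u) + √(q u)) ^ 2 ∂μ ≤ 2 ^ 2 := by linarith
  calc tvDist μ p q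
      = 1 / 2 * ∫ u, |(√(p u) - √(q u)) * (√(p u) + √(q u))| ∂μ := by
        rw [tvDist, integral_congr_ae h_factor]
    _ ≤ 1 / 2 * (√(∫ u, (√(p u) - √(q u)) ^ 2 ∂μ) * 2) := by
        have h_cauchySchwarz := integral_abs_mul_le_sqrt_mul_sqrt
          ((memLp_two_sqrt hp hp₀).sub (memLp_two_sqrt hq hq₀))
          ((memLp_two_sqrt hp hp₀).add (memLp_two_sqrt hq hq₀))
        simp only [Pi.sub_apply, Pi.add_apply] at h_cauchySchwarz
        refine mul_le_mul_of_nonneg_left (h_cauchySchwarz.trans ?_) one_half_pos.le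
        exact mul_le_mul_of_nonneg_left (sqrt_le_iff.mpr ⟨zero_le_two, h_add_le⟩) (sqrt_nonneg _)
    _ = √2 * hellingerDist μ p q := by
        rw [hellingerDist, ← sqrt_mul zero_le_two, ← mul_assoc 2 (1 / 2 : ℝ),
          mul_one_div_cancel two_ne_zero, one_mul]
        ring

theorem integral_sq_sqrt_normalizedDensity_sub_le (hp : Integrable p μ) (hp₀ : 0 ≤ᵐ[μ] p)
    (hp_pos : 0 < ∫ u, p u ∂μ) (hq : Integrable q μ) (hq₀ : 0 ≤ᵐ[μ] q)
    (hq_pos : 0 < ∫ u, q u ∂μ) :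
    ∫ u, (√(normalizedDensity μ p u) - √(normalizedDensity μ q u)) ^ 2 ∂μ ≤
      (∫ u, (√(p u) - √(q u)) ^ 2 ∂μ) / (√(∫ u, p u ∂μ) * √(∫ u, q u ∂μ)) := by
  have h_sub := integral_sq_linear_combination_sqrt hp hp₀ hq hq₀ 1 (-1)
  have h_normalized := integral_sq_linear_combination_sqrt hp hp₀ hq hq₀
    (√(∫ u, p u ∂μ))⁻¹ (-(√(∫ u, q u ∂μ))⁻¹)
  simp only [one_mul, neg_mul, ← sub_eq_add_neg] at h_sub h_normalized
  simp only [normalizedDensity, sqrt_mul (inv_nonneg.mpr hp_pos.le),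
    sqrt_mul (inv_nonneg.mpr hq_pos.le), sqrt_inv]
  rw [h_sub, h_normalized]
  set A := √(∫ u, p u ∂μ)
  set B := √(∫ u, q u ∂μ)
  set S := ∫ u, √(p u) * √(q u) ∂μ
  have hA : 0 < A := sqrt_pos.mpr hp_pos
  have hB : 0 < B := sqrt_pos.mpr hq_pos
  rw [← sq_sqrt hp_pos.le, ← sq_sqrt hq_pos.le]
  calc A⁻¹ ^ 2 * A ^ 2 + (-B⁻¹) ^ 2 * B ^ 2 + 2 * A⁻¹ * -B⁻¹ * S
      = (A ^ 2 + B ^ 2 - 2 * S) / (A * B) - (A - B) ^ 2 / (A * B) := by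
        field_simp
        ring
    _ ≤ (A ^ 2 + B ^ 2 - 2 * S) / (A * B) := sub_le_self _ (by positivity)
    _ = (1 ^ 2 * A ^ 2 + (-1) ^ 2 * B ^ 2 + 2 * 1 * -1 * S) / (A * B) := by ring

theorem hellingerDist_normalizedDensity_le (hp : Integrable p μ) (hp₀ : 0 ≤ᵐ[μ] p)
    (hq : Integrable q μ) (hq₀ : 0 ≤ᵐ[μ] q) {c : ℝ} (hc : 0 < c)
    (hcp : c ≤ ∫ u, p u ∂μ) (hcq : c ≤ ∫ u, q u ∂μ) :
    hellingerDist μ (normalizedDensity μ p) (normalizedDensity μ q) ≤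
      hellingerDist μ p q / √c := by
  have hc_le : c ≤ √(∫ u, p u ∂μ) * √(∫ u, q u ∂μ) := by
    rw [← mul_self_sqrt hc.le]
    gcongr
  rw [hellingerDist, hellingerDist, ← sqrt_div' _ hc.le, mul_div_assoc]
  gcongr
  exact (integral_sq_sqrt_normalizedDensity_sub_le hp hp₀ (hc.trans_le hcp) hq hq₀
    (hc.trans_le hcq)).trans (by gcongr)

theorem integrable_exp_neg_sq_div_two [IsFiniteMeasure μ] {f : U → ℝ} (hf : AEMeasurable f μ) :
    Integrable (fun u => rexp (-(f u ^ 2 / 2))) μ := by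
  refine Integrable.of_mem_Icc 0 1 (by fun_prop) (ae_of_all _ fun u => ?_)
  exact ⟨(exp_pos _).le, exp_le_one_iff.mpr (neg_nonpos.mpr (by positivity))⟩

end Densities

section Likelihood

variable {U : Type*} {J : ℕ} {Γ : Matrix (Fin J) (Fin J) ℝ} {G : U → Fin J → ℝ}

/-- The Gaussian likelihood `exp (-Φ(u; y))` of the data `y`, without the factor
`det (2πΓ) ^ (-1/2)`, which cancels in the posterior density. -/
noncomputable def likelihood (Γ : Matrix (Fin J) (Fin J) ℝ) (G : U → Fin J → ℝ)
    (y : Fin J → ℝ) (u : U) : ℝ :=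
  rexp (-(misfit Γ G u y))

theorem sqrt_likelihood (y : Fin J → ℝ) (u : U) :
    √(likelihood Γ G y u) = rexp (-(covNorm Γ (y - G u) / 2) ^ 2) := by
  rw [likelihood, misfit, ← exp_half]
  ring_nf

theorem abs_sqrt_likelihood_sub_le (hΓ : Γ.PosDef) (y y' : Fin J → ℝ) (u : U) :
    |√(likelihood Γ G y u) - √(likelihood Γ G y' u)| ≤ covNorm Γ (y - y') / 2 := by
  have h_lip := lipschitzWith_exp_neg_sq.dist_le_mul
    (covNorm Γ (y - G u) / 2) (covNorm Γ (y' - G u) / 2)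
  have h_triangle := abs_covNorm_sub_covNorm_le hΓ (y - G u) (y' - G u)
  rw [sub_sub_sub_cancel_right] at h_triangle
  rw [sqrt_likelihood, sqrt_likelihood]
  calc |rexp (-(covNorm Γ (y - G u) / 2) ^ 2) - rexp (-(covNorm Γ (y' - G u) / 2) ^ 2)|
      ≤ |covNorm Γ (y - G u) / 2 - covNorm Γ (y' - G u) / 2| := by
        simpa only [dist_eq, NNReal.coe_one, one_mul] using h_lip
    _ = |covNorm Γ (y - G u) - covNorm Γ (y' - G u)| / 2 := by
        rw [← sub_div, abs_div, abs_two]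
    _ ≤ covNorm Γ (y - y') / 2 := by gcongr

theorem exp_neg_sq_div_two_le_likelihood (hΓ : Γ.PosDef) {r : ℝ} {y : Fin J → ℝ}
    (hy : covNorm Γ y ≤ r) (u : U) :
    rexp (-((r + covNorm Γ (G u)) ^ 2 / 2)) ≤ likelihood Γ G y u := by
  have h_triangle : covNorm Γ (y - G u) ≤ r + covNorm Γ (G u) :=
    (covNorm_sub_le hΓ y (G u)).trans (by gcongr)
  have h_nonneg := covNorm_nonneg (Γ := Γ) (y - G u)
  unfold likelihood misfit
  gcongr

variable [MeasurableSpace U] {μ : Measure U}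

theorem postDensity_eq_normalizedDensity (y : Fin J → ℝ) :
    postDensity Γ G μ y = normalizedDensity μ (likelihood Γ G y) :=
  rfl

theorem likelihood_nonneg (y : Fin J → ℝ) : 0 ≤ᵐ[μ] likelihood Γ G y :=
  ae_of_all _ fun _ => (exp_pos _).le

variable [IsFiniteMeasure μ]

theorem integrable_likelihood (hG : AEMeasurable G μ) (y : Fin J → ℝ) :
    Integrable (likelihood Γ G y) μ :=
  integrable_exp_neg_sq_div_two (f := fun u => covNorm Γ (y - G u))
    (continuous_covNorm.measurable.comp_aemeasurable (aemeasurable_const.sub hG))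

theorem hellingerDist_likelihood_le (hΓ : Γ.PosDef) (y y' : Fin J → ℝ) :
    hellingerDist μ (likelihood Γ G y) (likelihood Γ G y') ≤
      √(μ.real Set.univ / 2) * (covNorm Γ (y - y') / 2) :=
  hellingerDist_le_of_abs_sqrt_sub_le (div_nonneg (covNorm_nonneg _) zero_le_two)
    (ae_of_all _ (abs_sqrt_likelihood_sub_le hΓ y y'))

theorem exists_pos_forall_le_integral_likelihood [NeZero μ] (hΓ : Γ.PosDef)
    (hG : AEMeasurable G μ) (r : ℝ) :
    ∃ c > 0, ∀ y, covNorm Γ y ≤ r → c ≤ ∫ u, likelihood Γ G y u ∂μ := by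
  have h_int : Integrable (fun u => rexp (-((r + covNorm Γ (G u)) ^ 2 / 2))) μ :=
    integrable_exp_neg_sq_div_two
      (aemeasurable_const.add (continuous_covNorm.measurable.comp_aemeasurable hG))
  exact ⟨_, integral_exp_pos h_int, fun y hy =>
    integral_mono h_int (integrable_likelihood hG y) (exp_neg_sq_div_two_le_likelihood hΓ hy)⟩

theorem tvDist_postDensity_le [NeZero μ] (hG : AEMeasurable G μ) (y y' : Fin J → ℝ) :
    tvDist μ (postDensity Γ G μ y) (postDensity Γ G μ y') ≤
      √2 * hellingerDist μ (postDensity Γ G μ y) (postDensity Γ G μ y') := by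
  have h_int (z : Fin J → ℝ) : Integrable (likelihood Γ G z) μ := integrable_likelihood hG z
  have h_pos (z : Fin J → ℝ) : 0 < ∫ u, likelihood Γ G z u ∂μ := integral_exp_pos (h_int z)
  simp only [postDensity_eq_normalizedDensity]
  exact tvDist_le_sqrt_two_mul_hellingerDist
    (integrable_normalizedDensity (h_int y)) (normalizedDensity_nonneg (likelihood_nonneg y))
    (integral_normalizedDensity (h_pos y).ne')
    (integrable_normalizedDensity (h_int y')) (normalizedDensity_nonneg (likelihood_nonneg y'))
    (integral_normalizedDensity (h_pos y').ne')

theorem exists_hellingerDist_postDensity_le [NeZero μ] (hΓ : Γ.PosDef)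
    (hG : AEMeasurable G μ) (r : ℝ) :
    ∃ C : ℝ, ∀ y y' : Fin J → ℝ, covNorm Γ y ≤ r → covNorm Γ y' ≤ r →
      hellingerDist μ (postDensity Γ G μ y) (postDensity Γ G μ y') ≤ C * covNorm Γ (y - y') := by
  obtain ⟨c, hc, hcZ⟩ := exists_pos_forall_le_integral_likelihood hΓ hG r
  refine ⟨√(μ.real Set.univ / 2) / (2 * √c), fun y y' hy hy' => ?_⟩
  simp only [postDensity_eq_normalizedDensity]
  calc hellingerDist μ (normalizedDensity μ (likelihood Γ G y))
        (normalizedDensity μ (likelihood Γ G y'))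
      ≤ hellingerDist μ (likelihood Γ G y) (likelihood Γ G y') / √c :=
        hellingerDist_normalizedDensity_le
          (integrable_likelihood hG y) (likelihood_nonneg y)
          (integrable_likelihood hG y') (likelihood_nonneg y') hc (hcZ y hy) (hcZ y' hy')
    _ ≤ √(μ.real Set.univ / 2) * (covNorm Γ (y - y') / 2) / √c := by
        gcongr
        exact hellingerDist_likelihood_le hΓ y y'
    _ = √(μ.real Set.univ / 2) / (2 * √c) * covNorm Γ (y - y') := by ring

end Likelihood

theorem posterior_lipschitz_wellPosedness_general
    {U : Type*} [MeasurableSpace U] (μ₀ : Measure U) [IsFiniteMeasure μ₀] [NeZero μ₀]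
    {J : ℕ} (Γ : Matrix (Fin J) (Fin J) ℝ) (hΓ : Γ.PosDef)
    (G : U → Fin J → ℝ) (hG : AEMeasurable G μ₀) (r : ℝ) :
    ∃ C₁ C₂ : ℝ, ∀ y y' : Fin J → ℝ, covNorm Γ y ≤ r → covNorm Γ y' ≤ r →
      tvDist μ₀ (postDensity Γ G μ₀ y) (postDensity Γ G μ₀ y') ≤ C₁ * covNorm Γ (y - y') ∧
      hellingerDist μ₀ (postDensity Γ G μ₀ y) (postDensity Γ G μ₀ y') ≤
        C₂ * covNorm Γ (y - y') := by
  obtain ⟨C, hC⟩ := exists_hellingerDist_postDensity_le hΓ hG r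
  refine ⟨√2 * C, C, fun y y' hy hy' => ⟨?_, hC y y' hy hy'⟩⟩
  rw [mul_assoc]
  exact (tvDist_postDensity_le hG y y').trans
    (mul_le_mul_of_nonneg_left (hC y y' hy hy') (sqrt_nonneg 2))

/-- **Lipschitz well-posedness of the Bayesian posterior in the data.**
Let `(U, 𝒜, μ₀)` be a probability space, `Γ` symmetric positive definite, `𝒢` measurable,
`Φ(u;y) = ½|y − 𝒢(u)|_Γ²` and `M(r,u) = r + |𝒢(u)|_Γ`.  If `∫ M(r,u)² dμ₀ < ∞` and
`Z(y) > 0` for `|y|_Γ ≤ r`, then there are `C₁(r), C₂(r)` such that for all data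
`y, y'` with `max{|y|_Γ, |y'|_Γ} < r`, the posteriors satisfy
`d_TV(μ^y, μ^{y'}) ≤ C₁|y − y'|_Γ` and `d_Hell(μ^y, μ^{y'}) ≤ C₂|y − y'|_Γ`,
the distances being computed via the posterior densities with respect to the prior `μ₀`. -/
theorem posterior_lipschitz_wellPosedness
    {U : Type*} [MeasurableSpace U] (μ₀ : Measure U) [IsProbabilityMeasure μ₀]
    {J : ℕ} (Γ : Matrix (Fin J) (Fin J) ℝ) (hΓ : Γ.PosDef) (hΓsymm : Γ.IsSymm)
    (G : U → Fin J → ℝ) (hGmeas : Measurable G)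
    (r : ℝ) (hr : 0 < r)
    (hM2 : Integrable (fun u => (r + covNorm Γ (G u)) ^ 2) μ₀)
    (hZ : ∀ y : Fin J → ℝ, covNorm Γ y ≤ r →
      0 < ∫ u, Real.exp (-(misfit Γ G u y)) ∂μ₀) :
    ∃ C₁ C₂ : ℝ, ∀ y y' : Fin J → ℝ, covNorm Γ y < r → covNorm Γ y' < r →
      ((1 / 2) * ∫ u, |postDensity Γ G μ₀ y u - postDensity Γ G μ₀ y' u| ∂μ₀
          ≤ C₁ * covNorm Γ (y - y')) ∧
      (Real.sqrt ((1 / 2) * ∫ u,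
            (Real.sqrt (postDensity Γ G μ₀ y u) -
              Real.sqrt (postDensity Γ G μ₀ y' u)) ^ 2 ∂μ₀)
          ≤ C₂ * covNorm Γ (y - y')) := by
  obtain ⟨C₁, C₂, h⟩ := posterior_lipschitz_wellPosedness_general μ₀ Γ hΓ G hGmeas.aemeasurable r
  exact ⟨C₁, C₂, fun y y' hy hy' => h y y' hy.le hy'.le⟩
end
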